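/- For every c > 0 there exist constants N > 0 and C > 0 such that for all ν ≥ N and all x with ν < x ≤ (1+c)ν and x·g(ν/x) ≥ 1, | √(π/2) · (x² − ν²)^{1/4} · J_ν(x) − sin(π x g(ν/x) + π/4) | ≤ C / (x·g(ν/x)). -/

import Mathlib

open Real MeasureTheory Set

/-- The Bessel function of the first kind of order `ν ≥ 0`, for `x > 0`, via the
integral representation. -/
noncomputable def besselJ (ν x : ℝ) : ℝ :=
  (1 / π) * (∫ θ in (0:ℝ)..π, Real.cos (x * Real.sin θ - ν * θ)) -
    (Real.sin (ν * π) / π) * ∫ t in Set.Ioi (0:ℝ), Real.exp (-x * Real.sinh t - ν * t)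

/-- The function `g(t) = (√(1-t²) - t arccos t)/π`. -/
noncomputable def gfun (t : ℝ) : ℝ := (Real.sqrt (1 - t ^ 2) - t * Real.arccos t) / π

/-!
Bessel's operator applied to either kernel in the integral representation of `J_ν` is an exact
derivative in the integration variable, so `J_ν` solves Bessel's equation. For fixed `ν`, stationary
phase gives `√(π x / 2) J_ν(x) - cos (x - ν π / 2 - π / 4) → 0` as `x → ∞`.

Uniformity in `ν` comes from the equation alone. With `p = (x² - ν²)^(1/4)` and the phase
`φ = π x g(ν / x)`, so that `dφ/dx = p² / x`, the function `W = p J_ν` satisfies `W_φφ + W = H_φ W`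
for an explicit decreasing `H`, with `0 ≤ H ≤ 1 / (2 φ)`. Hence `W` changes by at most
`H(x) · sup |W|` over any whole number of periods of the phase starting at `x`. Letting the number
of periods tend to infinity replaces the far value of `√(π / 2) W` by `cos (φ(x) - π / 4)`, and the
same estimate bounds `√(π / 2) |W|` by `2` as soon as `φ(x) ≥ 1`.
-/

open Filter
open scoped Topology Interval

/-! ### Bessel's equation -/

/-- `y` solves the inhomogeneous Bessel equation `x² y'' + x y' + (x² - ν²) y = r` on `(0, ∞)`.
The equation is encoded by solving it for `y''`, the derivative of `y'`. -/
def SolvesBessel (ν : ℝ) (r y : ℝ → ℝ) : Prop :=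
  ∃ y' : ℝ → ℝ, ∀ x, 0 < x →
    HasDerivAt y (y' x) x ∧
      HasDerivAt y' ((r x - x * y' x - (x ^ 2 - ν ^ 2) * y x) / x ^ 2) x

namespace SolvesBessel

variable {ν : ℝ} {r s y z : ℝ → ℝ}

lemma const_mul (hy : SolvesBessel ν r y) (k : ℝ) :
    SolvesBessel ν (fun x => k * r x) (fun x => k * y x) := by
  obtain ⟨y', hy'⟩ := hy
  refine ⟨fun x => k * y' x, fun x hx => ⟨(hy' x hx).1.const_mul k, ?_⟩⟩
  exact ((hy' x hx).2.const_mul k).congr_deriv (by ring)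

lemma sub (hy : SolvesBessel ν r y) (hz : SolvesBessel ν s z) :
    SolvesBessel ν (fun x => r x - s x) (fun x => y x - z x) := by
  obtain ⟨y', hy'⟩ := hy
  obtain ⟨z', hz'⟩ := hz
  refine ⟨fun x => y' x - z' x, fun x hx => ⟨(hy' x hx).1.sub (hz' x hx).1, ?_⟩⟩
  exact ((hy' x hx).2.sub (hz' x hx).2).congr_deriv (by ring)

end SolvesBessel

/-- The Anger function, the first summand of `besselJ`. -/
noncomputable def angerJ (ν x : ℝ) : ℝ :=
  1 / π * ∫ θ in (0 : ℝ)..π, cos (x * sin θ - ν * θ)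

/-- The associated Anger–Weber function: `- sin (ν π)` times it is the second summand of
`besselJ`. -/
noncomputable def angerWeberA (ν x : ℝ) : ℝ :=
  1 / π * ∫ t in Ioi (0 : ℝ), exp (-x * sinh t - ν * t)

lemma besselJ_eq_angerJ_sub (ν x : ℝ) :
    besselJ ν x = angerJ ν x - sin (ν * π) * angerWeberA ν x := by
  rw [besselJ, angerJ, angerWeberA]
  ring

lemma hasDerivAt_intervalIntegral_of_continuous {E : Type*} [NormedAddCommGroup E]
    [NormedSpace ℝ E] {F F' : ℝ → ℝ → E} (a b x : ℝ)
    (hF : ∀ y, Continuous (F y)) (hF' : Continuous (Function.uncurry F'))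
    (hderiv : ∀ y t, HasDerivAt (fun z => F z t) (F' y t) y) :
    HasDerivAt (fun y => ∫ t in a..b, F y t) (∫ t in a..b, F' x t) x := by
  obtain ⟨C, hC⟩ := ((isCompact_closedBall x 1).prod isCompact_uIcc).exists_bound_of_continuousOn
    (hF'.continuousOn (s := Metric.closedBall x 1 ×ˢ uIcc a b))
  refine (intervalIntegral.hasDerivAt_integral_of_dominated_loc_of_deriv_le (bound := fun _ => C)
    (Metric.closedBall_mem_nhds x one_pos) (.of_forall fun y => (hF y).aestronglyMeasurable)
    ((hF x).intervalIntegrable _ _) (hF'.uncurry_left x).aestronglyMeasurable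
    (.of_forall fun t ht y hy => ?_) intervalIntegrable_const
    (.of_forall fun t _ y _ => hderiv y t)).2
  exact hC (y, t) ⟨hy, uIoc_subset_uIcc ht⟩

lemma hasDerivAt_integral_cos (ν x : ℝ) :
    HasDerivAt (fun y => ∫ θ in (0 : ℝ)..π, cos (y * sin θ - ν * θ))
      (∫ θ in (0 : ℝ)..π, -sin θ * sin (x * sin θ - ν * θ)) x := by
  refine hasDerivAt_intervalIntegral_of_continuous _ _ _ (fun y => by fun_prop)
    (F' := fun y θ => -sin θ * sin (y * sin θ - ν * θ)) (by fun_prop) fun y θ => ?_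
  exact (((hasDerivAt_id y).mul_const (sin θ)).sub_const (ν * θ)).cos.congr_deriv
    (by simp only [id]; ring)

lemma hasDerivAt_integral_sin_mul_sin (ν x : ℝ) :
    HasDerivAt (fun y => ∫ θ in (0 : ℝ)..π, -sin θ * sin (y * sin θ - ν * θ))
      (∫ θ in (0 : ℝ)..π, -sin θ ^ 2 * cos (x * sin θ - ν * θ)) x := by
  refine hasDerivAt_intervalIntegral_of_continuous _ _ _ (fun y => by fun_prop)
    (F' := fun y θ => -sin θ ^ 2 * cos (y * sin θ - ν * θ)) (by fun_prop) fun y θ => ?_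
  exact ((((hasDerivAt_id y).mul_const (sin θ)).sub_const (ν * θ)).sin.const_mul
    (-sin θ)).congr_deriv (by simp only [id]; ring)

lemma integral_besselOperator_cos (ν x : ℝ) :
    x ^ 2 * (∫ θ in (0 : ℝ)..π, -sin θ ^ 2 * cos (x * sin θ - ν * θ)) +
        x * (∫ θ in (0 : ℝ)..π, -sin θ * sin (x * sin θ - ν * θ)) +
        (x ^ 2 - ν ^ 2) * (∫ θ in (0 : ℝ)..π, cos (x * sin θ - ν * θ)) =
      (x - ν) * sin (ν * π) := by
  have hderiv (θ : ℝ) : HasDerivAt (fun θ => (x * cos θ + ν) * sin (x * sin θ - ν * θ))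
      (x ^ 2 * (-sin θ ^ 2 * cos (x * sin θ - ν * θ)) +
        x * (-sin θ * sin (x * sin θ - ν * θ)) +
        (x ^ 2 - ν ^ 2) * cos (x * sin θ - ν * θ)) θ := by
    refine ((((hasDerivAt_cos θ).const_mul x).add_const ν).mul
      (((hasDerivAt_sin θ).const_mul x).sub ((hasDerivAt_id θ).const_mul ν)).sin).congr_deriv ?_
    simp only [sin_sq θ, Pi.sub_apply, id]
    ring
  have hftc := intervalIntegral.integral_eq_sub_of_hasDerivAt (a := 0) (b := π)
    (fun θ _ => hderiv θ) ((by fun_prop : Continuous _).intervalIntegrable _ _)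
  rw [intervalIntegral.integral_add, intervalIntegral.integral_add,
    intervalIntegral.integral_const_mul, intervalIntegral.integral_const_mul,
    intervalIntegral.integral_const_mul] at hftc
  · rw [hftc]
    simp only [cos_pi, sin_pi, mul_zero, zero_sub, sin_neg, cos_zero, sin_zero, sub_self]
    ring
  all_goals exact (by fun_prop : Continuous _).intervalIntegrable _ _

lemma solvesBessel_angerJ (ν : ℝ) :
    SolvesBessel ν (fun x => (x - ν) * sin (ν * π) / π) (angerJ ν) := by
  refine ⟨fun x => 1 / π * ∫ θ in (0 : ℝ)..π, -sin θ * sin (x * sin θ - ν * θ),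
    fun x hx => ⟨(hasDerivAt_integral_cos ν x).const_mul _,
      ((hasDerivAt_integral_sin_mul_sin ν x).const_mul _).congr_deriv ?_⟩⟩
  rw [angerJ, eq_div_iff (by positivity)]
  linear_combination (1 / π) * integral_besselOperator_cos ν x

section AngerWeber

variable {ν a x t : ℝ}

lemma sinh_pow_mul_exp_le (ha : 0 < a) (hax : a ≤ x) (hν : 0 ≤ ν) (ht : 0 < t) (n : ℕ) :
    |sinh t ^ n * exp (-x * sinh t - ν * t)| ≤
      n.factorial * (2 / a) ^ n * exp (-(a / 2) * t) := by
  have hts : t ≤ sinh t := self_le_sinh_iff.2 ht.le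
  have hs : 0 ≤ sinh t := ht.le.trans hts
  have hpow : sinh t ^ n ≤ n.factorial * (2 / a) ^ n * exp (a / 2 * sinh t) := by
    have h := pow_div_factorial_le_exp (a / 2 * sinh t) (by positivity) n
    rw [div_le_iff₀ (by positivity), mul_pow] at h
    calc sinh t ^ n = (2 / a) ^ n * ((a / 2) ^ n * sinh t ^ n) := by
          rw [← mul_assoc, ← mul_pow, div_mul_div_cancel₀ ha.ne', div_self two_ne_zero, one_pow,
            one_mul]
      _ ≤ (2 / a) ^ n * (exp (a / 2 * sinh t) * n.factorial) := by gcongr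
      _ = n.factorial * (2 / a) ^ n * exp (a / 2 * sinh t) := by ring
  have hexp : exp (-x * sinh t - ν * t) ≤ exp (-(a / 2 * sinh t)) * exp (-(a / 2) * t) := by
    rw [← exp_add, exp_le_exp]
    nlinarith [mul_nonneg hν ht.le]
  rw [abs_of_nonneg (mul_nonneg (pow_nonneg hs n) (exp_pos _).le)]
  calc sinh t ^ n * exp (-x * sinh t - ν * t)
      ≤ n.factorial * (2 / a) ^ n * exp (a / 2 * sinh t) *
          (exp (-(a / 2 * sinh t)) * exp (-(a / 2) * t)) := by gcongr
    _ = n.factorial * (2 / a) ^ n * exp (-(a / 2) * t) := by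
        rw [exp_neg]
        field_simp

lemma integrableOn_sinh_pow_mul_exp (hx : 0 < x) (hν : 0 ≤ ν) (n : ℕ) :
    IntegrableOn (fun t => sinh t ^ n * exp (-x * sinh t - ν * t)) (Ioi 0) := by
  refine ((exp_neg_integrableOn_Ioi 0 (half_pos hx)).const_mul
    (n.factorial * (2 / x) ^ n)).mono' (by fun_prop) ?_
  filter_upwards [ae_restrict_mem measurableSet_Ioi] with t ht
  exact sinh_pow_mul_exp_le hx le_rfl hν ht n

lemma hasDerivAt_integral_sinh_pow_mul_exp (hx : 0 < x) (hν : 0 ≤ ν) (n : ℕ) :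
    HasDerivAt (fun y => ∫ t in Ioi (0 : ℝ), sinh t ^ n * exp (-y * sinh t - ν * t))
      (-∫ t in Ioi (0 : ℝ), sinh t ^ (n + 1) * exp (-x * sinh t - ν * t)) x := by
  rw [← integral_neg]
  refine (hasDerivAt_integral_of_dominated_loc_of_deriv_le
    (F := fun y t => sinh t ^ n * exp (-y * sinh t - ν * t))
    (F' := fun y t => -(sinh t ^ (n + 1) * exp (-y * sinh t - ν * t)))
    (Ioi_mem_nhds (half_lt_self hx)) (.of_forall fun y => by fun_prop)
    (integrableOn_sinh_pow_mul_exp hx hν n) (by fun_prop) ?_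
    ((exp_neg_integrableOn_Ioi 0 (half_pos (half_pos hx))).const_mul
      ((n + 1).factorial * (2 / (x / 2)) ^ (n + 1))) (.of_forall fun t y _ => ?_)).2
  · filter_upwards [ae_restrict_mem measurableSet_Ioi] with t ht y hy
    rw [norm_neg]
    exact sinh_pow_mul_exp_le (half_pos hx) (le_of_lt hy) hν ht (n + 1)
  · exact ((((hasDerivAt_id y).neg.mul_const (sinh t)).sub_const (ν * t)).exp.const_mul
      (sinh t ^ n)).congr_deriv (by simp only [Pi.neg_apply, id]; ring)

lemma integrableOn_cosh_mul_exp (hx : 0 < x) (hν : 0 ≤ ν) :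
    IntegrableOn (fun t => cosh t * exp (-x * sinh t - ν * t)) (Ioi 0) := by
  refine ((integrableOn_sinh_pow_mul_exp hx hν 1).add
    (integrableOn_sinh_pow_mul_exp hx hν 0)).mono' (by fun_prop) ?_
  filter_upwards [ae_restrict_mem measurableSet_Ioi] with t (ht : 0 < t)
  have hcosh : cosh t ≤ sinh t + 1 := by
    linarith [cosh_sub_sinh t, exp_le_one_iff.2 (neg_nonpos.2 ht.le)]
  rw [norm_of_nonneg (mul_nonneg (cosh_pos t).le (exp_pos _).le)]
  calc cosh t * exp (-x * sinh t - ν * t)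
      ≤ (sinh t + 1) * exp (-x * sinh t - ν * t) := by gcongr
    _ = sinh t ^ 1 * exp (-x * sinh t - ν * t) + sinh t ^ 0 * exp (-x * sinh t - ν * t) := by ring

lemma integral_besselOperator_exp (hx : 0 < x) (hν : 0 ≤ ν) :
    x ^ 2 * (∫ t in Ioi (0 : ℝ), sinh t ^ 2 * exp (-x * sinh t - ν * t)) -
        x * (∫ t in Ioi (0 : ℝ), sinh t ^ 1 * exp (-x * sinh t - ν * t)) +
        (x ^ 2 - ν ^ 2) * (∫ t in Ioi (0 : ℝ), sinh t ^ 0 * exp (-x * sinh t - ν * t)) =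
      x - ν := by
  have hint := integrableOn_sinh_pow_mul_exp hx hν
  have hderiv (t : ℝ) : HasDerivAt (fun t => (ν - x * cosh t) * exp (-x * sinh t - ν * t))
      (x ^ 2 * (sinh t ^ 2 * exp (-x * sinh t - ν * t)) -
        x * (sinh t ^ 1 * exp (-x * sinh t - ν * t)) +
        (x ^ 2 - ν ^ 2) * (sinh t ^ 0 * exp (-x * sinh t - ν * t))) t := by
    refine ((((hasDerivAt_cosh t).const_mul x).const_sub ν).mul
      (((hasDerivAt_sinh t).const_mul (-x)).sub ((hasDerivAt_id t).const_mul ν)).exp).congr_deriv ?_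
    simp only [sinh_sq t, Pi.sub_apply, id]
    ring
  have hint₂ := (hint 2).const_mul (x ^ 2)
  have hint₁ := (hint 1).const_mul x
  have hint₀ := (hint 0).const_mul (x ^ 2 - ν ^ 2)
  have hderivInt := (hint₂.sub hint₁).add hint₀
  have hprim : IntegrableOn (fun t => (ν - x * cosh t) * exp (-x * sinh t - ν * t)) (Ioi 0) :=
    (((hint 0).const_mul ν).sub ((integrableOn_cosh_mul_exp hx hν).const_mul x)).congr
      (.of_forall fun t => by simp only [Pi.sub_apply, pow_zero]; ring)
  have hftc := integral_Ioi_of_hasDerivAt_of_tendsto' (fun t _ => hderiv t) hderivInt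
    (tendsto_zero_of_hasDerivAt_of_integrableOn_Ioi (fun t _ => hderiv t) hderivInt hprim)
  rw [integral_add, integral_sub hint₂ hint₁, integral_const_mul, integral_const_mul,
    integral_const_mul] at hftc
  · rw [hftc]
    simp
  · exact hint₂.sub hint₁
  · exact hint₀

lemma solvesBessel_angerWeberA (hν : 0 ≤ ν) :
    SolvesBessel ν (fun x => (x - ν) / π) (angerWeberA ν) := by
  refine ⟨fun x => 1 / π * -∫ t in Ioi (0 : ℝ), sinh t ^ 1 * exp (-x * sinh t - ν * t),
    fun x hx => ⟨?_, ?_⟩⟩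
  · have h := (hasDerivAt_integral_sinh_pow_mul_exp hx hν 0).const_mul (1 / π)
    simp only [pow_zero, one_mul, zero_add] at h
    exact h
  · refine ((hasDerivAt_integral_sinh_pow_mul_exp hx hν 1).neg.const_mul (1 / π)).congr_deriv ?_
    have h := integral_besselOperator_exp hx hν
    simp only [pow_zero, one_mul] at h
    rw [angerWeberA, eq_div_iff (by positivity)]
    linear_combination (1 / π) * h

end AngerWeber

lemma solvesBessel_besselJ {ν : ℝ} (hν : 0 ≤ ν) : SolvesBessel ν 0 (besselJ ν) := by
  convert (solvesBessel_angerJ ν).sub ((solvesBessel_angerWeberA hν).const_mul (sin (ν * π)))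
    using 1
  · ext x
    simp only [Pi.zero_apply]
    ring
  · exact funext (besselJ_eq_angerJ_sub ν)


/-! ### Oscillatory integrals -/

lemma norm_integral_mul_deriv_le {a b : ℝ} (hab : a ≤ b) {ψ ψ' u u' : ℝ → ℂ}
    (hψ : ∀ t ∈ Icc a b, HasDerivAt ψ (ψ' t) t) (hu : ∀ t ∈ Icc a b, HasDerivAt u (u' t) t)
    (hψ' : IntervalIntegrable ψ' volume a b) (hu' : IntervalIntegrable u' volume a b)
    (hu_le : ∀ t ∈ Icc a b, ‖u t‖ ≤ 1) :
    ‖∫ t in a..b, ψ t * u' t‖ ≤ ‖ψ b‖ + ‖ψ a‖ + ∫ t in a..b, ‖ψ' t‖ := by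
  rw [← uIcc_of_le hab] at hψ hu
  rw [intervalIntegral.integral_mul_deriv_eq_deriv_mul hψ hu hψ' hu']
  have hboundary (t : ℝ) (ht : t ∈ Icc a b) : ‖ψ t * u t‖ ≤ ‖ψ t‖ := by
    rw [norm_mul]
    exact mul_le_of_le_one_right (norm_nonneg _) (hu_le t ht)
  have hint : ‖∫ t in a..b, ψ' t * u t‖ ≤ ∫ t in a..b, ‖ψ' t‖ := by
    refine intervalIntegral.norm_integral_le_of_norm_le hab (.of_forall fun t ht => ?_) hψ'.norm
    rw [norm_mul]
    exact mul_le_of_le_one_right (norm_nonneg _) (hu_le t (Ioc_subset_Icc_self ht))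
  calc ‖ψ b * u b - ψ a * u a - ∫ t in a..b, ψ' t * u t‖
      ≤ ‖ψ b * u b‖ + ‖ψ a * u a‖ + ‖∫ t in a..b, ψ' t * u t‖ :=
        (norm_sub_le _ _).trans (add_le_add_left (norm_sub_le _ _) _)
    _ ≤ ‖ψ b‖ + ‖ψ a‖ + ∫ t in a..b, ‖ψ' t‖ :=
        add_le_add (add_le_add (hboundary b (right_mem_Icc.2 hab))
          (hboundary a (left_mem_Icc.2 hab))) hint

section Fresnel

variable {b : ℂ} {R T : ℝ}

lemma integral_zpow_neg_two (hzero : (0 : ℝ) ∉ [[R, T]]) :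
    ∫ r in R..T, r ^ (-2 : ℤ) = R⁻¹ - T⁻¹ := by
  rw [integral_zpow (.inr ⟨by norm_num, hzero⟩)]
  norm_num
  ring

lemma norm_cexp_neg_mul_sq_le_one (hb : 0 ≤ b.re) (r : ℝ) :
    ‖Complex.exp (-b * (r : ℂ) ^ 2)‖ ≤ 1 := by
  rw [norm_cexp_neg_mul_sq, exp_le_one_iff]
  nlinarith [sq_nonneg r]

lemma norm_integral_cexp_neg_mul_sq_le (hb : 0 ≤ b.re) (hb₀ : b ≠ 0) (hR : 0 < R) (hRT : R ≤ T) :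
    ‖∫ r in R..T, Complex.exp (-b * (r : ℂ) ^ 2)‖ ≤ 1 / (‖b‖ * R) := by
  have hT : 0 < T := hR.trans_le hRT
  have hpos {r : ℝ} (hr : r ∈ Icc R T) : 0 < r := hR.trans_le hr.1
  have hzero : (0 : ℝ) ∉ [[R, T]] := by
    rw [uIcc_of_le hRT]
    exact fun h => lt_irrefl _ (hpos h)
  let ψ : ℝ → ℂ := fun r => -(2 * b)⁻¹ * (r⁻¹ : ℝ)
  let ψ' : ℝ → ℂ := fun r => -(2 * b)⁻¹ * (-(r ^ 2)⁻¹ : ℝ)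
  have hψ (r : ℝ) (hr : r ∈ Icc R T) : HasDerivAt ψ (ψ' r) r :=
    (hasDerivAt_inv (hpos hr).ne').ofReal_comp.const_mul _
  have hu (r : ℝ) : HasDerivAt (fun r : ℝ => Complex.exp (-b * (r : ℂ) ^ 2))
      (Complex.exp (-b * (r : ℂ) ^ 2) * (-b * (2 * r))) r :=
    (((hasDerivAt_id r).ofReal_comp.pow 2).const_mul (-b)).cexp.congr_deriv (by simp)
  have hψ'_int : IntervalIntegrable ψ' volume R T := by
    refine ContinuousOn.intervalIntegrable ?_
    have : ∀ r ∈ [[R, T]], r ^ 2 ≠ 0 := fun r hr => pow_ne_zero 2 fun h => hzero (h ▸ hr)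
    fun_prop (disch := assumption)
  have hψ_norm {r : ℝ} (hr : 0 < r) : ‖ψ r‖ = (2 * ‖b‖)⁻¹ * r⁻¹ := by
    simp [ψ, abs_of_pos hr]
  have hψ'_norm : ∫ r in R..T, ‖ψ' r‖ = (2 * ‖b‖)⁻¹ * (R⁻¹ - T⁻¹) := by
    have : ∀ r, ‖ψ' r‖ = (2 * ‖b‖)⁻¹ * r ^ (-2 : ℤ) := fun r => by simp [ψ', zpow_neg]
    simp only [this, intervalIntegral.integral_const_mul, integral_zpow_neg_two hzero]
  calc ‖∫ r in R..T, Complex.exp (-b * (r : ℂ) ^ 2)‖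
      = ‖∫ r in R..T, ψ r * (Complex.exp (-b * (r : ℂ) ^ 2) * (-b * (2 * r)))‖ := by
        congr 1
        refine intervalIntegral.integral_congr fun r hr => ?_
        have : (r : ℂ) ≠ 0 := Complex.ofReal_ne_zero.2 fun h => hzero (h ▸ hr)
        simp only [ψ, Complex.ofReal_inv]
        field_simp
    _ ≤ ‖ψ T‖ + ‖ψ R‖ + ∫ r in R..T, ‖ψ' r‖ :=
        norm_integral_mul_deriv_le hRT hψ (fun r _ => hu r) hψ'_int
          ((by fun_prop : Continuous _).intervalIntegrable _ _)
          fun r _ => norm_cexp_neg_mul_sq_le_one hb r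
    _ = 1 / (‖b‖ * R) := by
        rw [hψ_norm hT, hψ_norm hR, hψ'_norm]
        field_simp
        ring

lemma norm_integral_cexp_neg_mul_sq_sub_le (hb : 0 < b.re) (hR : 0 < R) :
    ‖(∫ r in (0 : ℝ)..R, Complex.exp (-b * (r : ℂ) ^ 2)) - (π / b) ^ (1 / 2 : ℂ) / 2‖ ≤
      1 / (‖b‖ * R) := by
  have hb₀ : b ≠ 0 := fun h => hb.ne' (by simp [h])
  have hint (c d : ℝ) :
      IntervalIntegrable (fun r : ℝ => Complex.exp (-b * (r : ℂ) ^ 2)) volume c d :=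
    (by fun_prop : Continuous _).intervalIntegrable _ _
  have hlim := (intervalIntegral_tendsto_integral_Ioi 0
    (integrable_cexp_neg_mul_sq hb).integrableOn tendsto_id).const_sub
      (∫ r in (0 : ℝ)..R, Complex.exp (-b * (r : ℂ) ^ 2))
  rw [← integral_gaussian_complex_Ioi hb]
  refine le_of_tendsto hlim.norm ?_
  filter_upwards [eventually_ge_atTop R] with T hT
  rw [id, norm_sub_rev, intervalIntegral.integral_interval_sub_left (hint _ _) (hint _ _)]
  exact norm_integral_cexp_neg_mul_sq_le hb.le hb₀ hR hT

lemma norm_integral_cexp_neg_I_mul_sq_sub_le (hR : 0 < R) :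
    ‖(∫ r in (0 : ℝ)..R, Complex.exp (-Complex.I * (r : ℂ) ^ 2)) -
      (π / Complex.I) ^ (1 / 2 : ℂ) / 2‖ ≤ 1 / R := by
  have hint : Continuous fun δ : ℝ =>
      ∫ r in (0 : ℝ)..R, Complex.exp (-((δ : ℂ) + Complex.I) * (r : ℂ) ^ 2) :=
    intervalIntegral.continuous_parametric_intervalIntegral_of_continuous' (by fun_prop) _ _
  have hslit : (π / ((0 : ℝ) + Complex.I) : ℂ) ∈ Complex.slitPlane := by
    right
    simp [pi_ne_zero]
  have hdiv : ContinuousAt (fun δ : ℝ => (π : ℂ) / ((δ : ℂ) + Complex.I)) 0 :=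
    continuousAt_const.div (by fun_prop) (by simp)
  have hvalue : ContinuousAt (fun δ : ℝ => (π / ((δ : ℂ) + Complex.I)) ^ (1 / 2 : ℂ) / 2) 0 :=
    (hdiv.cpow continuousAt_const hslit).div_const 2
  have hlim := (hint.continuousAt.sub hvalue).norm.tendsto.mono_left
    (nhdsWithin_le_nhds (s := Ioi 0))
  simp only [Complex.ofReal_zero, zero_add, Pi.sub_apply] at hlim
  refine le_of_tendsto hlim ?_
  filter_upwards [self_mem_nhdsWithin] with δ (hδ : 0 < δ)
  have hnorm : 1 ≤ ‖(δ : ℂ) + Complex.I‖ := by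
    simpa using Complex.abs_im_le_norm ((δ : ℂ) + Complex.I)
  refine (norm_integral_cexp_neg_mul_sq_sub_le (by simpa using hδ) hR).trans ?_
  gcongr
  exact le_mul_of_one_le_left hR.le hnorm

lemma pi_div_I_cpow_half :
    (π / Complex.I : ℂ) ^ (1 / 2 : ℂ) = √π * Complex.exp (-(π / 4) * Complex.I) := by
  have hlog : Complex.log ((π : ℝ) * -Complex.I) = (log π : ℝ) + -(π / 2) * Complex.I := by
    rw [Complex.log_ofReal_mul pi_pos (by simp), Complex.log_neg_I]
  rw [div_eq_mul_inv, Complex.inv_I, Complex.cpow_def_of_ne_zero (by simp [pi_ne_zero]), hlog,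
    sqrt_eq_rpow, Complex.ofReal_cpow pi_pos.le,
    Complex.cpow_def_of_ne_zero (by simp [pi_ne_zero]), ← Complex.exp_add,
    ← Complex.ofReal_log pi_pos.le]
  congr 1
  push_cast
  ring

lemma tendsto_integral_cexp_neg_I_mul_sq :
    Tendsto (fun R : ℝ => ∫ r in (0 : ℝ)..R, Complex.exp (-Complex.I * (r : ℂ) ^ 2)) atTop
      (𝓝 (√π / 2 * Complex.exp (-(π / 4) * Complex.I))) := by
  have hval : (√π / 2 * Complex.exp (-(π / 4) * Complex.I) : ℂ) =
      (π / Complex.I) ^ (1 / 2 : ℂ) / 2 := by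
    rw [pi_div_I_cpow_half]
    ring
  rw [hval, tendsto_iff_norm_sub_tendsto_zero]
  refine squeeze_zero' (.of_forall fun R => norm_nonneg _) ?_
    (tendsto_const_nhds.div_atTop tendsto_id : Tendsto (fun R : ℝ => 1 / R) atTop (𝓝 0))
  filter_upwards [eventually_gt_atTop 0] with R hR
  exact norm_integral_cexp_neg_I_mul_sq_sub_le hR

end Fresnel

section StationaryPhase

variable {x : ℝ}

lemma integral_cexp_cos_mul_cos_half (hx : 0 < x) :
    ∫ u in (0 : ℝ)..(π / 2), (cos (u / 2) : ℂ) * Complex.exp (x * cos u * Complex.I) =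
      √2 / √x * Complex.exp (x * Complex.I) *
        ∫ r in (0 : ℝ)..√x, Complex.exp (-Complex.I * (r : ℂ) ^ 2) := by
  have hsubst := intervalIntegral.integral_deriv_smul_comp (a := 0) (b := π / 2)
    (f := fun u => √(2 * x) * sin (u / 2)) (f' := fun u => √(2 * x) * (cos (u / 2) * (1 / 2)))
    (g := fun r => Complex.exp (-Complex.I * (r : ℂ) ^ 2))
    (fun u _ => (((hasDerivAt_id u).div_const 2).sin).const_mul (√(2 * x))) (by fun_prop)
    (by fun_prop)
  have hend : √(2 * x) * sin (π / 2 / 2) = √x := by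
    rw [show π / 2 / 2 = π / 4 by ring, sin_pi_div_four, sqrt_mul zero_le_two]
    linear_combination (√x / 2) * mul_self_sqrt (zero_le_two (α := ℝ))
  have hphase (u : ℝ) : x - (√(2 * x) * sin (u / 2)) ^ 2 = x * cos u := by
    rw [mul_pow, sq_sqrt (by positivity), sin_sq, cos_sq, mul_div_cancel₀ u two_ne_zero]
    ring
  have hscale : √2 / √x * √(2 * x) = 2 := by
    rw [sqrt_mul zero_le_two, mul_comm (√2), ← mul_assoc, div_mul_cancel₀ _ (sqrt_pos.2 hx).ne',
      mul_self_sqrt zero_le_two]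
  simp only [zero_div, sin_zero, mul_zero, hend] at hsubst
  rw [← hsubst, ← intervalIntegral.integral_const_mul]
  refine intervalIntegral.integral_congr fun u _ => ?_
  have hexp : Complex.exp (x * cos u * Complex.I) = Complex.exp (x * Complex.I) *
      Complex.exp (-Complex.I * ((√(2 * x) * sin (u / 2) : ℝ) : ℂ) ^ 2) := by
    rw [← Complex.exp_add, ← Complex.ofReal_mul, ← hphase]
    push_cast
    ring_nf
  have hscale' : (√2 / √x * √(2 * x) : ℂ) = 2 := by exact_mod_cast hscale
  simp only [Function.comp, Complex.real_smul, hexp, Complex.ofReal_mul, Complex.ofReal_div,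
    Complex.ofReal_one, Complex.ofReal_ofNat]
  linear_combination (-(cos (u / 2) : ℂ) / 2 * Complex.exp (x * Complex.I) *
    Complex.exp (-Complex.I * (√(2 * x) * sin (u / 2)) ^ 2)) * hscale'

lemma norm_integral_mul_sin_mul_cexp_cos_le (hx : 0 < x) {a b A B : ℝ} (hab : a ≤ b)
    {ψ ψ' : ℝ → ℝ} (hψ : ∀ u ∈ Icc a b, HasDerivAt ψ (ψ' u) u) (hψ' : ContinuousOn ψ' (Icc a b))
    (hA : ∀ u ∈ Icc a b, |ψ u| ≤ A) (hB : ∀ u ∈ Icc a b, |ψ' u| ≤ B) :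
    ‖∫ u in a..b, (ψ u * sin u : ℂ) * Complex.exp (x * cos u * Complex.I)‖ ≤
      (2 * A + B * (b - a)) / x := by
  let q : ℂ := -(x * Complex.I)⁻¹
  have hq (s : ℝ) : ‖q * s‖ = |s| / x := by simp [q, abs_of_pos hx, div_eq_inv_mul]
  have hexp (u : ℝ) : HasDerivAt (fun u : ℝ => Complex.exp (x * cos u * Complex.I))
      (Complex.exp (x * cos u * Complex.I) * (x * (-sin u : ℝ) * Complex.I)) u :=
    (((hasDerivAt_cos u).ofReal_comp.const_mul (x : ℂ)).mul_const Complex.I).cexp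
  have hcont : ContinuousOn (fun u => q * (ψ' u : ℝ)) (uIcc a b) := by
    rw [uIcc_of_le hab]
    fun_prop
  have hint : ∫ u in a..b, ‖q * (ψ' u : ℝ)‖ ≤ B / x * (b - a) := by
    have h := intervalIntegral.norm_integral_le_of_norm_le_const (C := B / x)
      (f := fun u => ‖q * (ψ' u : ℝ)‖) (a := a) (b := b) fun u hu => by
        rw [norm_norm, hq]
        gcongr
        rw [uIoc_of_le hab] at hu
        exact hB u (Ioc_subset_Icc_self hu)
    rw [abs_of_nonneg (sub_nonneg.2 hab)] at h
    exact (le_abs_self _).trans h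
  have hx₀ : (x : ℂ) ≠ 0 := Complex.ofReal_ne_zero.2 hx.ne'
  calc ‖∫ u in a..b, (ψ u * sin u : ℂ) * Complex.exp (x * cos u * Complex.I)‖
      = ‖∫ u in a..b, q * (ψ u : ℝ) *
          (Complex.exp (x * cos u * Complex.I) * (x * (-sin u : ℝ) * Complex.I))‖ := by
        congr 1
        refine intervalIntegral.integral_congr fun u _ => ?_
        simp only [q, Complex.ofReal_neg]
        field_simp
    _ ≤ ‖q * (ψ b : ℝ)‖ + ‖q * (ψ a : ℝ)‖ + ∫ u in a..b, ‖q * (ψ' u : ℝ)‖ :=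
        norm_integral_mul_deriv_le hab (fun u hu => (hψ u hu).ofReal_comp.const_mul q)
          (fun u _ => hexp u) hcont.intervalIntegrable
          ((by fun_prop : Continuous _).intervalIntegrable _ _)
          fun u _ => by rw [← Complex.ofReal_mul, Complex.norm_exp_ofReal_mul_I]
    _ ≤ A / x + A / x + B / x * (b - a) := by
        rw [hq, hq]
        gcongr
        exacts [hA b (right_mem_Icc.2 hab), hA a (left_mem_Icc.2 hab)]
    _ = (2 * A + B * (b - a)) / x := by ring

section Amplitude

variable {D D' : ℝ → ℝ} {K : ℝ}

lemma le_pi_div_two_mul_sin {u : ℝ} (hu : u ∈ Icc 0 (π / 2)) : u ≤ π / 2 * sin u := by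
  calc u = π / 2 * (2 / π * u) := by field_simp
    _ ≤ π / 2 * sin u := by gcongr; exact mul_le_sin hu.1 hu.2

lemma abs_div_sin_le {d u : ℝ} (hd : |d| ≤ K * u ^ 2) (hu : u ∈ Ioc 0 (π / 2)) :
    |d / sin u| ≤ K * π ^ 2 / 4 := by
  have hsin : 0 < sin u := sin_pos_of_pos_of_lt_pi hu.1 (by linarith [hu.2, pi_pos])
  have hK : 0 ≤ K := nonneg_of_mul_nonneg_left ((abs_nonneg d).trans hd) (pow_pos hu.1 2)
  rw [abs_div, abs_of_pos hsin, div_le_iff₀ hsin]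
  calc |d| ≤ K * (u * u) := by rwa [← sq]
    _ ≤ K * (π / 2 * (π / 2 * sin u)) := by
        gcongr
        exacts [hu.1.le, hu.2, le_pi_div_two_mul_sin (Ioc_subset_Icc_self hu)]
    _ = K * π ^ 2 / 4 * sin u := by ring

lemma abs_deriv_div_sin_le {d d' u : ℝ} (hd : |d| ≤ K * u ^ 2) (hd' : |d'| ≤ K * u)
    (hu : u ∈ Ioc 0 (π / 2)) :
    |(d' * sin u - d * cos u) / sin u ^ 2| ≤ K * π ^ 2 / 2 := by
  have hsin : 0 < sin u := sin_pos_of_pos_of_lt_pi hu.1 (by linarith [hu.2, pi_pos])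
  have hK : 0 ≤ K := nonneg_of_mul_nonneg_left ((abs_nonneg d').trans hd') hu.1
  rw [abs_div, abs_of_pos (pow_pos hsin 2), div_le_iff₀ (pow_pos hsin 2)]
  calc |d' * sin u - d * cos u| ≤ |d'| * |sin u| + |d| * |cos u| := by
        rw [← abs_mul, ← abs_mul]
        exact abs_sub _ _
    _ ≤ K * u * u + K * u ^ 2 * 1 := by
        rw [abs_of_pos hsin]
        gcongr
        exacts [mul_nonneg hK hu.1.le, sin_le hu.1.le, abs_cos_le_one u]
    _ = 2 * K * u ^ 2 := by ring
    _ ≤ 2 * K * (π / 2 * sin u) ^ 2 := by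
        gcongr
        exacts [hu.1.le, le_pi_div_two_mul_sin (Ioc_subset_Icc_self hu)]
    _ = K * π ^ 2 / 2 * sin u ^ 2 := by ring

lemma norm_integral_mul_cexp_cos_le_of_pos (hx : 0 < x) (hderiv : ∀ u, HasDerivAt D (D' u) u)
    (hD'cont : Continuous D') (hD : ∀ u ∈ Icc 0 (π / 2), |D u| ≤ K * u ^ 2)
    (hD' : ∀ u ∈ Icc 0 (π / 2), |D' u| ≤ K * u) {ε : ℝ} (hε : ε ∈ Ioo 0 (π / 2)) :
    ‖∫ u in ε..(π / 2), (D u : ℂ) * Complex.exp (x * cos u * Complex.I)‖ ≤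
      K * π ^ 2 / 2 * (1 + π / 2) / x := by
  have hsub : Icc ε (π / 2) ⊆ Ioc 0 (π / 2) := fun u hu => ⟨hε.1.trans_le hu.1, hu.2⟩
  have hsin {u : ℝ} (hu : u ∈ Icc ε (π / 2)) : sin u ≠ 0 :=
    (sin_pos_of_pos_of_lt_pi (hsub hu).1 (by linarith [hu.2, pi_pos])).ne'
  have hψ' : ContinuousOn (fun u => (D' u * sin u - D u * cos u) / sin u ^ 2)
      (Icc ε (π / 2)) := by
    have : ∀ u ∈ Icc ε (π / 2), sin u ^ 2 ≠ 0 := fun u hu => pow_ne_zero 2 (hsin hu)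
    have : Continuous D := continuous_iff_continuousAt.2 fun u => (hderiv u).continuousAt
    fun_prop (disch := assumption)
  have hK : 0 ≤ K * π ^ 2 / 2 := (abs_nonneg _).trans <| abs_deriv_div_sin_le
    (hD _ (right_mem_Icc.2 (by positivity))) (hD' _ (right_mem_Icc.2 (by positivity)))
    (right_mem_Ioc.2 (by positivity))
  have hcongr : ∫ u in ε..(π / 2), (D u : ℂ) * Complex.exp (x * cos u * Complex.I) =
      ∫ u in ε..(π / 2), ((D u / sin u : ℝ) * sin u : ℂ) * Complex.exp (x * cos u * Complex.I) := by
    refine intervalIntegral.integral_congr fun u hu => ?_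
    rw [uIcc_of_le hε.2.le] at hu
    simp only [← Complex.ofReal_mul, div_mul_cancel₀ _ (hsin hu)]
  rw [hcongr]
  calc ‖∫ u in ε..(π / 2), ((D u / sin u : ℝ) * sin u : ℂ) * Complex.exp (x * cos u * Complex.I)‖
      ≤ (2 * (K * π ^ 2 / 4) + K * π ^ 2 / 2 * (π / 2 - ε)) / x :=
        norm_integral_mul_sin_mul_cexp_cos_le hx hε.2.le
          (fun u hu => (hderiv u).div (hasDerivAt_sin u) (hsin hu)) hψ'
          (fun u hu => abs_div_sin_le (hD u (Ioc_subset_Icc_self (hsub hu))) (hsub hu))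
          fun u hu => abs_deriv_div_sin_le (hD u (Ioc_subset_Icc_self (hsub hu)))
            (hD' u (Ioc_subset_Icc_self (hsub hu))) (hsub hu)
    _ ≤ (2 * (K * π ^ 2 / 4) + K * π ^ 2 / 2 * (π / 2)) / x := by
        gcongr
        linarith [hε.1]
    _ = K * π ^ 2 / 2 * (1 + π / 2) / x := by ring

lemma norm_integral_mul_cexp_cos_le (hx : 0 < x) (hderiv : ∀ u, HasDerivAt D (D' u) u)
    (hD'cont : Continuous D') (hD : ∀ u ∈ Icc 0 (π / 2), |D u| ≤ K * u ^ 2)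
    (hD' : ∀ u ∈ Icc 0 (π / 2), |D' u| ≤ K * u) :
    ‖∫ u in (0 : ℝ)..(π / 2), (D u : ℂ) * Complex.exp (x * cos u * Complex.I)‖ ≤
      K * π ^ 2 / 2 * (1 + π / 2) / x := by
  have hDcont : Continuous D := continuous_iff_continuousAt.2 fun u => (hderiv u).continuousAt
  have hint (a b : ℝ) : IntervalIntegrable
      (fun u : ℝ => (D u : ℂ) * Complex.exp (x * cos u * Complex.I)) volume a b :=
    (by fun_prop : Continuous _).intervalIntegrable _ _
  have hlim : Tendsto
      (fun ε => ‖∫ u in ε..(π / 2), (D u : ℂ) * Complex.exp (x * cos u * Complex.I)‖) (𝓝[>] 0)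
      (𝓝 ‖∫ u in (0 : ℝ)..(π / 2), (D u : ℂ) * Complex.exp (x * cos u * Complex.I)‖) := by
    simp only [intervalIntegral.integral_symm (π / 2), norm_neg]
    exact ((intervalIntegral.continuous_primitive hint (π / 2)).tendsto 0).norm.mono_left
      nhdsWithin_le_nhds
  refine le_of_tendsto hlim ?_
  filter_upwards [Ioo_mem_nhdsGT (half_pos pi_pos)] with ε hε
  exact norm_integral_mul_cexp_cos_le_of_pos hx hderiv hD'cont hD hD' hε

end Amplitude

lemma abs_cos_mul_sub_cos_mul_le (μ ν u : ℝ) :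
    |cos (ν * u) - cos (μ * u)| ≤ (ν ^ 2 + μ ^ 2) * u ^ 2 := by
  have hν := one_sub_sq_div_two_le_cos (x := ν * u)
  have hμ := one_sub_sq_div_two_le_cos (x := μ * u)
  rw [abs_le]
  constructor <;>
    nlinarith [cos_le_one (ν * u), cos_le_one (μ * u), sq_nonneg (ν * u), sq_nonneg (μ * u)]

lemma abs_mul_sin_mul_sub_le (μ ν : ℝ) {u : ℝ} (hu : 0 ≤ u) :
    |-ν * sin (ν * u) + μ * sin (μ * u)| ≤ (ν ^ 2 + μ ^ 2) * u := by
  have hsin (κ : ℝ) : |κ * sin (κ * u)| ≤ κ ^ 2 * u := by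
    calc |κ * sin (κ * u)| ≤ |κ| * |κ * u| := by
          rw [abs_mul]
          exact mul_le_mul_of_nonneg_left abs_sin_le_abs (abs_nonneg κ)
      _ = κ ^ 2 * u := by rw [abs_mul, abs_of_nonneg hu, ← mul_assoc, abs_mul_abs_self, sq]
  have h := (abs_add_le (-ν * sin (ν * u)) (μ * sin (μ * u)))
  rw [neg_mul, abs_neg] at h
  rw [neg_mul]
  linarith [hsin ν, hsin μ]

lemma tendsto_sqrt_mul_integral_cos_sub_cos_mul_cexp_cos (μ ν : ℝ) :
    Tendsto (fun x : ℝ => √x * ∫ u in (0 : ℝ)..(π / 2),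
      ((cos (ν * u) - cos (μ * u) : ℝ) : ℂ) * Complex.exp (x * cos u * Complex.I))
      atTop (𝓝 0) := by
  have hderiv (u : ℝ) : HasDerivAt (fun u => cos (ν * u) - cos (μ * u))
      (-ν * sin (ν * u) + μ * sin (μ * u)) u := by
    refine (((hasDerivAt_id u).const_mul ν).cos.sub
      ((hasDerivAt_id u).const_mul μ).cos).congr_deriv ?_
    simp only [id]
    ring
  let K := (ν ^ 2 + μ ^ 2) * π ^ 2 / 2 * (1 + π / 2)
  refine squeeze_zero_norm' (a := fun x => K / √x) ?_
    (tendsto_const_nhds.div_atTop tendsto_sqrt_atTop)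
  filter_upwards [eventually_gt_atTop 0] with x hx
  have hle := norm_integral_mul_cexp_cos_le hx hderiv (by fun_prop)
    (fun u _ => abs_cos_mul_sub_cos_mul_le μ ν u)
    (fun u hu => abs_mul_sin_mul_sub_le μ ν hu.1)
  rw [norm_mul, Complex.norm_real, norm_of_nonneg (sqrt_nonneg x)]
  calc _ ≤ √x * (K / x) := by gcongr
    _ = K / √x := by rw [mul_div_left_comm, sqrt_div_self', mul_one_div]

lemma tendsto_sqrt_mul_integral_cos_half_mul_cexp_cos :
    Tendsto (fun x : ℝ => √x * (∫ u in (0 : ℝ)..(π / 2),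
        (cos (u / 2) : ℂ) * Complex.exp (x * cos u * Complex.I)) -
      √(π / 2) * Complex.exp ((x - π / 4) * Complex.I)) atTop (𝓝 0) := by
  have hlim := ((tendsto_iff_norm_sub_tendsto_zero.1 tendsto_integral_cexp_neg_I_mul_sq).comp
    tendsto_sqrt_atTop).const_mul √2
  rw [mul_zero] at hlim
  refine squeeze_zero_norm' ?_ hlim
  filter_upwards [eventually_gt_atTop 0] with x hx
  have hconst : (√(π / 2) : ℂ) = √2 * (√π / 2) := by
    norm_cast
    rw [sqrt_div pi_pos.le]
    field_simp
    exact (sq_sqrt zero_le_two).symm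
  have hx₀ : (√x : ℂ) ≠ 0 := Complex.ofReal_ne_zero.2 (sqrt_pos.2 hx).ne'
  rw [integral_cexp_cos_mul_cos_half hx]
  refine le_of_eq ?_
  calc _ = ‖√2 * Complex.exp (x * Complex.I) *
        ((∫ r in (0 : ℝ)..√x, Complex.exp (-Complex.I * (r : ℂ) ^ 2)) -
          √π / 2 * Complex.exp (-(π / 4) * Complex.I))‖ := by
        rw [show ((x : ℂ) - π / 4) * Complex.I = x * Complex.I + -(π / 4) * Complex.I by ring,
          Complex.exp_add, hconst]
        congr 1
        field_simp
    _ = _ := by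
        rw [norm_mul, norm_mul, Complex.norm_exp_ofReal_mul_I, Complex.norm_real,
          norm_of_nonneg (sqrt_nonneg 2), mul_one, Function.comp]

-- The amplitude `cos (ν u)` may be replaced by `cos (u / 2)`, which differs from it by `O(u²)` at
-- the stationary point `u = 0` and for which the integral reduces to Fresnel's.
lemma tendsto_sqrt_mul_integral_cos_mul_cexp_cos (ν : ℝ) :
    Tendsto (fun x : ℝ => √x * (∫ u in (0 : ℝ)..(π / 2),
        (cos (ν * u) : ℂ) * Complex.exp (x * cos u * Complex.I)) -
      √(π / 2) * Complex.exp ((x - π / 4) * Complex.I)) atTop (𝓝 0) := by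
  have hsum := (tendsto_sqrt_mul_integral_cos_sub_cos_mul_cexp_cos (1 / 2) ν).add
    tendsto_sqrt_mul_integral_cos_half_mul_cexp_cos
  rw [add_zero] at hsum
  refine hsum.congr fun x => ?_
  rw [← add_sub_assoc, ← mul_add, ← intervalIntegral.integral_add
    ((by fun_prop : Continuous _).intervalIntegrable _ _)
    ((by fun_prop : Continuous _).intervalIntegrable _ _)]
  simp only [one_div_mul_eq_div, Complex.ofReal_sub, sub_mul, sub_add_cancel]

end StationaryPhase

/-! ### The asymptotics at infinity for a fixed order -/

lemma integral_cos_mul_sin_sub (ν x : ℝ) :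
    ∫ θ in (0 : ℝ)..π, cos (x * sin θ - ν * θ) =
      2 * ∫ u in (0 : ℝ)..(π / 2), cos (ν * u) * cos (x * cos u - ν * π / 2) := by
  let f : ℝ → ℝ := fun u => cos (x * cos u - ν * π / 2 - ν * u)
  have hf : Continuous f := by fun_prop
  calc ∫ θ in (0 : ℝ)..π, cos (x * sin θ - ν * θ)
      = ∫ θ in (0 : ℝ)..π, f (θ - π / 2) := by
        refine intervalIntegral.integral_congr fun θ _ => ?_
        simp only [f, cos_sub_pi_div_two]
        ring_nf
    _ = (∫ u in -(π / 2)..0, f u) + ∫ u in (0 : ℝ)..(π / 2), f u := by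
        rw [intervalIntegral.integral_comp_sub_right f, zero_sub, sub_half,
          intervalIntegral.integral_add_adjacent_intervals (hf.intervalIntegrable _ _)
            (hf.intervalIntegrable _ _)]
    _ = (∫ u in (0 : ℝ)..(π / 2), f (-u)) + ∫ u in (0 : ℝ)..(π / 2), f u := by
        rw [intervalIntegral.integral_comp_neg, neg_zero]
    _ = 2 * ∫ u in (0 : ℝ)..(π / 2), cos (ν * u) * cos (x * cos u - ν * π / 2) := by
        rw [← intervalIntegral.integral_add
          ((by fun_prop : Continuous fun u => f (-u)).intervalIntegrable _ _)
          (hf.intervalIntegrable _ _), ← intervalIntegral.integral_const_mul]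
        refine intervalIntegral.integral_congr fun u _ => ?_
        simp only [f, cos_neg, mul_neg, sub_neg_eq_add, cos_add, cos_sub _ (ν * u)]
        ring

lemma angerJ_eq_re_integral (ν x : ℝ) :
    angerJ ν x = 2 / π * (Complex.exp ((-(ν * π / 2) : ℝ) * Complex.I) *
      ∫ u in (0 : ℝ)..(π / 2), (cos (ν * u) : ℂ) * Complex.exp (x * cos u * Complex.I)).re := by
  have hint : IntervalIntegrable (fun u : ℝ => Complex.exp ((-(ν * π / 2) : ℝ) * Complex.I) *
      ((cos (ν * u) : ℂ) * Complex.exp (x * cos u * Complex.I))) volume 0 (π / 2) :=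
    (by fun_prop : Continuous _).intervalIntegrable _ _
  have hre := Complex.reCLM.intervalIntegral_comp_comm hint
  simp only [Complex.reCLM_apply] at hre
  rw [angerJ, integral_cos_mul_sin_sub, ← mul_assoc, one_div_mul_eq_div,
    ← intervalIntegral.integral_const_mul (Complex.exp ((-(ν * π / 2) : ℝ) * Complex.I)), ← hre]
  congr 1
  refine intervalIntegral.integral_congr fun u _ => ?_
  rw [mul_left_comm, ← Complex.exp_add, ← Complex.ofReal_mul x, ← add_mul, ← Complex.ofReal_add,
    Complex.re_ofReal_mul, Complex.exp_ofReal_mul_I_re, neg_add_eq_sub]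

lemma abs_angerWeberA_le {ν x : ℝ} (hν : 0 ≤ ν) (hx : 0 < x) :
    |angerWeberA ν x| ≤ 1 / (π * x) := by
  have hbound : ‖∫ t in Ioi (0 : ℝ), exp (-x * sinh t - ν * t)‖ ≤
      ∫ t in Ioi (0 : ℝ), exp (-x * t) := by
    refine norm_integral_le_of_norm_le (exp_neg_integrableOn_Ioi 0 hx) ?_
    filter_upwards [ae_restrict_mem measurableSet_Ioi] with t (ht : 0 < t)
    rw [norm_of_nonneg (exp_pos _).le, exp_le_exp]
    nlinarith [mul_nonneg hν ht.le, self_le_sinh_iff.2 ht.le]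
  rw [integral_exp_mul_Ioi (neg_neg_of_pos hx), mul_zero, exp_zero, neg_div_neg_eq, norm_eq_abs]
    at hbound
  rw [angerWeberA, abs_mul, abs_of_pos (one_div_pos.2 pi_pos), ← one_div_mul_one_div]
  gcongr

lemma tendsto_sqrt_mul_angerJ_sub_cos (ν : ℝ) :
    Tendsto (fun x => √x * (√(π / 2) * angerJ ν x) - cos (x - ν * π / 2 - π / 4))
      atTop (𝓝 0) := by
  have hlim := ((tendsto_sqrt_mul_integral_cos_mul_cexp_cos ν).const_mul
    (Complex.exp ((-(ν * π / 2) : ℝ) * Complex.I)))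
  have hre := ((Complex.continuous_re.tendsto _).comp hlim).const_mul (√(π / 2) * (2 / π))
  rw [mul_zero, Complex.zero_re, mul_zero] at hre
  refine hre.congr fun x => ?_
  have hconst : √(π / 2) * (2 / π) * √(π / 2) = 1 := by
    rw [mul_right_comm, mul_self_sqrt (by positivity), div_mul_div_cancel₀ two_ne_zero,
      div_self pi_ne_zero]
  have hmain : (Complex.exp ((-(ν * π / 2) : ℝ) * Complex.I) *
      (√(π / 2) * Complex.exp ((x - π / 4) * Complex.I))).re =
      √(π / 2) * cos (x - ν * π / 2 - π / 4) := by
    rw [mul_left_comm, ← Complex.exp_add, ← add_mul, Complex.re_ofReal_mul,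
      ← Complex.exp_ofReal_mul_I_re]
    push_cast
    ring_nf
  rw [Function.comp, mul_sub, Complex.sub_re, hmain, mul_left_comm, Complex.re_ofReal_mul,
    angerJ_eq_re_integral]
  linear_combination -cos (x - ν * π / 2 - π / 4) * hconst

lemma tendsto_sqrt_mul_angerWeberA {ν : ℝ} (hν : 0 ≤ ν) :
    Tendsto (fun x => √x * angerWeberA ν x) atTop (𝓝 0) := by
  refine squeeze_zero_norm' (a := fun x => 1 / π / √x) ?_
    (tendsto_const_nhds.div_atTop tendsto_sqrt_atTop)
  filter_upwards [eventually_gt_atTop 0] with x hx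
  rw [norm_mul, norm_of_nonneg (sqrt_nonneg x), norm_eq_abs]
  calc √x * |angerWeberA ν x| ≤ √x * (1 / (π * x)) := by
        gcongr
        exact abs_angerWeberA_le hν hx
    _ = 1 / π / √x := by rw [← div_div, mul_div_left_comm, sqrt_div_self', mul_one_div]

lemma tendsto_sqrt_mul_besselJ_sub_cos {ν : ℝ} (hν : 0 ≤ ν) :
    Tendsto (fun x => √x * (√(π / 2) * besselJ ν x) - cos (x - ν * π / 2 - π / 4))
      atTop (𝓝 0) := by
  have h := (tendsto_sqrt_mul_angerJ_sub_cos ν).sub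
    ((tendsto_sqrt_mul_angerWeberA hν).const_mul (√(π / 2) * sin (ν * π)))
  rw [mul_zero, sub_zero] at h
  refine h.congr fun x => ?_
  rw [besselJ_eq_angerJ_sub]
  ring

/-! ### Perturbed harmonic oscillators -/

/-- On `[a, ∞)`, the function `W` satisfies `W_ξξ + W = H_ξ W` in the variable `ξ = φ`, with a
nonnegative and nonincreasing control function `H`. The equation is recorded as a first-order system
for `W` and `V = W_ξ`; `φ'` and `H'` are the derivatives of `φ` and `H` in the original variable. -/
structure IsPerturbedOscillator (a : ℝ) (φ φ' H H' W V : ℝ → ℝ) : Prop where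
  hasDerivAt_phase : ∀ x ∈ Ici a, HasDerivAt φ (φ' x) x
  hasDerivAt_control : ∀ x ∈ Ici a, HasDerivAt H (H' x) x
  control_nonneg : ∀ x ∈ Ici a, 0 ≤ H x
  deriv_control_nonpos : ∀ x ∈ Ici a, H' x ≤ 0
  hasDerivAt : ∀ x ∈ Ici a, HasDerivAt W (φ' x * V x) x
  hasDerivAt_conj : ∀ x ∈ Ici a, HasDerivAt V ((H' x - φ' x) * W x) x

namespace IsPerturbedOscillator

variable {a b δ M : ℝ} {φ φ' H H' W V : ℝ → ℝ}

lemma mono (h : IsPerturbedOscillator a φ φ' H H' W V) (hab : a ≤ b) :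
    IsPerturbedOscillator b φ φ' H H' W V where
  hasDerivAt_phase x hx := h.hasDerivAt_phase x (hab.trans hx)
  hasDerivAt_control x hx := h.hasDerivAt_control x (hab.trans hx)
  control_nonneg x hx := h.control_nonneg x (hab.trans hx)
  deriv_control_nonpos x hx := h.deriv_control_nonpos x (hab.trans hx)
  hasDerivAt x hx := h.hasDerivAt x (hab.trans hx)
  hasDerivAt_conj x hx := h.hasDerivAt_conj x (hab.trans hx)

lemma continuousOn_phase (h : IsPerturbedOscillator a φ φ' H H' W V) : ContinuousOn φ (Ici a) :=
  HasDerivAt.continuousOn h.hasDerivAt_phase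

lemma antitoneOn_control (h : IsPerturbedOscillator a φ φ' H H' W V) : AntitoneOn H (Ici a) := by
  refine antitoneOn_of_hasDerivWithinAt_nonpos (f' := H') (convex_Ici a)
    (HasDerivAt.continuousOn h.hasDerivAt_control) ?_ ?_
  · exact fun x hx => (h.hasDerivAt_control x (interior_subset hx)).hasDerivWithinAt
  · exact fun x hx => h.deriv_control_nonpos x (interior_subset hx)

lemma hasDerivAt_rotate (h : IsPerturbedOscillator a φ φ' H H' W V) (c : ℝ) {x : ℝ}
    (hx : x ∈ Ici a) :
    HasDerivAt (fun x => W x * cos (φ x - c) - V x * sin (φ x - c))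
      (-(sin (φ x - c) * W x * H' x)) x := by
  have hφ := (h.hasDerivAt_phase x hx).sub_const c
  refine (((h.hasDerivAt x hx).mul hφ.cos).sub
    ((h.hasDerivAt_conj x hx).mul hφ.sin)).congr_deriv ?_
  ring

/- Rotating `(W, V)` back by the phase leaves a vector that moves only through the perturbation;
after a whole number of periods its first coordinate is again `W`. -/
lemma abs_sub_le_of_phase_eq (h : IsPerturbedOscillator a φ φ' H H' W V) (hab : a ≤ b)
    (hM : ∀ x ∈ Ici a, |W x| ≤ M) (n : ℕ) (hn : φ b = φ a + n * (2 * π)) :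
    |W b - W a| ≤ M * (H a - H b) := by
  set F : ℝ → ℝ := fun x => W x * cos (φ x - φ a) - V x * sin (φ x - φ a) with hF
  have hFa : F a = W a := by simp [hF]
  have hFb : F b = W b := by
    have hsin : sin (n * (2 * π)) = 0 := by simpa using sin_periodic.nat_mul_eq n
    simp [hF, hn, hsin]
  have hF' (x) (hx : x ∈ Ici a) := (h.hasDerivAt_rotate (φ a) hx).sub_const (F a)
  have hB (x) (hx : x ∈ Ici a) : HasDerivAt (fun x => M * (H a - H x)) (M * -H' x) x :=
    ((h.hasDerivAt_control x hx).const_sub (H a)).const_mul M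
  have hbound := image_norm_le_of_norm_deriv_right_le_deriv_boundary' (a := a) (b := b)
    (fun x hx => (hF' x hx.1).continuousAt.continuousWithinAt)
    (fun x hx => (hF' x hx.1).hasDerivWithinAt) (by simp [hF])
    (fun x hx => (hB x hx.1).continuousAt.continuousWithinAt)
    (fun x hx => (hB x hx.1).hasDerivWithinAt) ?_ (right_mem_Icc.2 hab)
  · rwa [← hFa, ← hFb]
  · intro x hx
    rw [norm_neg, norm_mul, norm_mul, norm_of_nonpos (h.deriv_control_nonpos x hx.1)]
    have hH' := neg_nonneg.2 (h.deriv_control_nonpos x hx.1)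
    have hsin : ‖sin (φ x - φ a)‖ * ‖W x‖ ≤ M :=
      (mul_le_of_le_one_left (norm_nonneg _) (abs_sin_le_one _)).trans (hM x hx.1)
    gcongr

lemma exists_seq_phase_eq (h : IsPerturbedOscillator a φ φ' H H' W V)
    (hφ : Tendsto φ atTop atTop) :
    ∃ b : ℕ → ℝ, Tendsto b atTop atTop ∧ ∀ n, a ≤ b n ∧ φ (b n) = φ a + n * (2 * π) := by
  have hex (n : ℕ) : ∃ b, a ≤ b ∧ φ b = φ a + n * (2 * π) := by
    obtain ⟨T, hφT, haT⟩ := ((hφ.eventually_ge_atTop (φ a + n * (2 * π))).and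
      (eventually_ge_atTop a)).exists
    have hle : φ a ≤ φ a + n * (2 * π) := le_add_of_nonneg_right (by positivity)
    obtain ⟨b, hb, hφb⟩ :=
      intermediate_value_Icc haT (h.continuousOn_phase.mono Icc_subset_Ici_self) ⟨hle, hφT⟩
    exact ⟨b, hb.1, hφb⟩
  choose b hab hb using hex
  refine ⟨b, tendsto_atTop.2 fun T => ?_, fun n => ⟨hab n, hb n⟩⟩
  obtain ⟨K, hK⟩ := (isCompact_Icc (a := a) (b := T)).bddAbove_image
    (h.continuousOn_phase.mono Icc_subset_Ici_self)
  have hφb : Tendsto (fun n => φ (b n)) atTop atTop := by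
    simp only [hb]
    exact tendsto_atTop_add_const_left _ _
      (tendsto_natCast_atTop_atTop.atTop_mul_const two_pi_pos)
  filter_upwards [hφb.eventually_gt_atTop K] with n hn
  by_contra! hbT
  exact hn.not_ge (hK ⟨b n, ⟨hab n, hbT.le⟩, rfl⟩)

lemma abs_sub_cos_le_mul (h : IsPerturbedOscillator a φ φ' H H' W V) (hφ : Tendsto φ atTop atTop)
    (hW : Tendsto (fun x => W x - cos (φ x - δ)) atTop (𝓝 0)) (hM : ∀ x ∈ Ici a, |W x| ≤ M) :
    |W a - cos (φ a - δ)| ≤ M * H a := by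
  obtain ⟨b, hb, hφb⟩ := h.exists_seq_phase_eq hφ
  have hcos (n : ℕ) : cos (φ (b n) - δ) = cos (φ a - δ) := by
    rw [(hφb n).2, add_sub_right_comm, cos_add_nat_mul_two_pi]
  have hlim : Tendsto (fun n => W (b n)) atTop (𝓝 (cos (φ a - δ))) := by
    simpa [Function.comp_def, hcos] using (hW.comp hb).add_const (cos (φ a - δ))
  have hM0 : 0 ≤ M := (abs_nonneg _).trans (hM a self_mem_Ici)
  rw [abs_sub_comm]
  refine le_of_tendsto (hlim.sub_const (W a)).abs (Eventually.of_forall fun n => ?_)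
  refine (h.abs_sub_le_of_phase_eq (hφb n).1 hM n (hφb n).2).trans ?_
  gcongr
  exact sub_le_self _ (h.control_nonneg _ (hφb n).1)

lemma exists_abs_le (h : IsPerturbedOscillator a φ φ' H H' W V)
    (hW : Tendsto (fun x => W x - cos (φ x - δ)) atTop (𝓝 0)) :
    ∃ M, ∀ x ∈ Ici a, |W x| ≤ M := by
  have hWev : ∀ᶠ x in atTop, |W x| ≤ 2 := by
    filter_upwards [hW.norm.eventually_le_const (by norm_num : ‖(0 : ℝ)‖ < 1)] with x hx
    rw [norm_eq_abs] at hx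
    linarith [abs_sub_abs_le_abs_sub (W x) (cos (φ x - δ)), abs_cos_le_one (φ x - δ)]
  obtain ⟨T, hT⟩ := eventually_atTop.1 hWev
  obtain ⟨M, hM⟩ := isCompact_Icc.exists_bound_of_continuousOn (s := Icc a T)
    ((HasDerivAt.continuousOn h.hasDerivAt).mono Icc_subset_Ici_self)
  refine ⟨max M 2, fun x hx => ?_⟩
  rcases le_total x T with hxT | hTx
  · exact (hM x ⟨hx, hxT⟩).trans (le_max_left _ _)
  · exact (hT x hTx).trans (le_max_right _ _)

lemma abs_le_two (h : IsPerturbedOscillator a φ φ' H H' W V) (hφ : Tendsto φ atTop atTop)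
    (hW : Tendsto (fun x => W x - cos (φ x - δ)) atTop (𝓝 0)) (hH : H a ≤ 1 / 2) :
    ∀ x ∈ Ici a, |W x| ≤ 2 := by
  obtain ⟨M, hM⟩ := h.exists_abs_le hW
  set S := sSup ((fun x => |W x|) '' Ici a)
  have hS : ∀ x ∈ Ici a, |W x| ≤ S := fun x hx =>
    le_csSup ⟨M, forall_mem_image.2 hM⟩ (mem_image_of_mem _ hx)
  have hself : S ≤ 1 + S * (1 / 2) := by
    refine csSup_le (nonempty_Ici.image _) (forall_mem_image.2 fun x hx => ?_)
    have hdist := (h.mono hx).abs_sub_cos_le_mul hφ hW fun z hz => hS z ((mem_Ici.1 hx).trans hz)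
    have hHx : S * H x ≤ S * (1 / 2) := by
      have hS0 : 0 ≤ S := (abs_nonneg _).trans (hS x hx)
      gcongr
      exact (h.antitoneOn_control self_mem_Ici hx hx).trans hH
    linarith [abs_sub_abs_le_abs_sub (W x) (cos (φ x - δ)), abs_cos_le_one (φ x - δ)]
  exact fun x hx => (hS x hx).trans (by linarith)

lemma abs_sub_cos_le_two_mul (h : IsPerturbedOscillator a φ φ' H H' W V)
    (hφ : Tendsto φ atTop atTop)
    (hW : Tendsto (fun x => W x - cos (φ x - δ)) atTop (𝓝 0)) (hH : H a ≤ 1 / 2) :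
    |W a - cos (φ a - δ)| ≤ 2 * H a :=
  h.abs_sub_cos_le_mul hφ hW (h.abs_le_two hφ hW hH)

end IsPerturbedOscillator

/-! ### The Debye phase and amplitude -/

/-- The factor `(x² - ν²)^(1/4)` that normalizes the oscillations of the solutions of Bessel's
equation to constant amplitude. -/
noncomputable def debyeAmplitude (ν x : ℝ) : ℝ := (x ^ 2 - ν ^ 2) ^ ((1 : ℝ) / 4)

/-- The phase `√(x² - ν²) - ν arccos (ν / x)` of the solutions of Bessel's equation beyond the
turning point `x = ν`; it equals `π x g(ν / x)`. -/
noncomputable def debyePhase (ν x : ℝ) : ℝ := √(x ^ 2 - ν ^ 2) - ν * arccos (ν / x)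

/-- The control function `H` of the Liouville–Green approximation: if `y` solves Bessel's equation,
then its product `W` with the Debye amplitude satisfies `W_ξξ + W = H_ξ W` in the variable
`ξ = debyePhase ν x`. -/
noncomputable def debyeControl (ν x : ℝ) : ℝ :=
  1 / 4 / debyeAmplitude ν x ^ 2 + 5 / 12 * ν ^ 2 / debyeAmplitude ν x ^ 6

/-- The derivative of `debyeControl ν`. -/
noncomputable def debyeControlDeriv (ν x : ℝ) : ℝ :=
  -(1 / 4 * x / debyeAmplitude ν x ^ 6 + 5 / 4 * ν ^ 2 * x / debyeAmplitude ν x ^ 10)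

lemma arctan_ge_sub_cube_div_three {u : ℝ} (hu : 0 ≤ u) : u - u ^ 3 / 3 ≤ arctan u := by
  have hderiv (v : ℝ) :
      HasDerivAt (fun v => arctan v - (v - v ^ 3 / 3)) (v ^ 4 / (1 + v ^ 2)) v := by
    refine ((hasDerivAt_arctan v).sub ((hasDerivAt_id' v).sub
      ((hasDerivAt_pow 3 v).div_const 3))).congr_deriv ?_
    have : 1 + v ^ 2 ≠ 0 := by positivity
    push_cast
    field_simp
    ring
  have hmono : Monotone fun v => arctan v - (v - v ^ 3 / 3) :=
    monotone_of_hasDerivAt_nonneg hderiv fun v => by positivity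
  simpa using hmono hu

section Debye

variable {ν x : ℝ}

lemma sq_sub_sq_pos_of_lt (hν : 0 ≤ ν) (hx : ν < x) : 0 < x ^ 2 - ν ^ 2 :=
  sub_pos.2 (pow_lt_pow_left₀ hx hν two_ne_zero)

lemma debyeAmplitude_pos (hν : 0 ≤ ν) (hx : ν < x) : 0 < debyeAmplitude ν x :=
  rpow_pos_of_pos (sq_sub_sq_pos_of_lt hν hx) _

lemma debyeAmplitude_pow_four (hν : 0 ≤ ν) (hx : ν < x) :
    debyeAmplitude ν x ^ 4 = x ^ 2 - ν ^ 2 := by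
  rw [debyeAmplitude, ← rpow_mul_natCast (sq_sub_sq_pos_of_lt hν hx).le]
  norm_num

lemma sqrt_sq_sub_sq_eq (hν : 0 ≤ ν) (hx : ν < x) : √(x ^ 2 - ν ^ 2) = debyeAmplitude ν x ^ 2 := by
  rw [← debyeAmplitude_pow_four hν hx, pow_mul _ 2 2, sqrt_sq (sq_nonneg _)]

lemma sqrt_one_sub_div_sq_eq (hν : 0 ≤ ν) (hx : ν < x) :
    √(1 - (ν / x) ^ 2) = debyeAmplitude ν x ^ 2 / x := by
  have hx0 : 0 < x := hν.trans_lt hx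
  rw [← sqrt_sq_sub_sq_eq hν hx, div_pow, one_sub_div (by positivity),
    sqrt_div (sq_sub_sq_pos_of_lt hν hx).le, sqrt_sq hx0.le]

lemma pi_mul_gfun_eq_debyePhase (hν : 0 ≤ ν) (hx : ν < x) :
    π * (x * gfun (ν / x)) = debyePhase ν x := by
  have hx0 : 0 < x := hν.trans_lt hx
  rw [gfun, debyePhase, sqrt_one_sub_div_sq_eq hν hx, sqrt_sq_sub_sq_eq hν hx]
  field_simp

lemma hasDerivAt_debyeAmplitude (hν : 0 ≤ ν) (hx : ν < x) :
    HasDerivAt (debyeAmplitude ν) (x / (2 * debyeAmplitude ν x ^ 3)) x := by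
  have hq := sq_sub_sq_pos_of_lt hν hx
  have hp := debyeAmplitude_pos hν hx
  refine (((hasDerivAt_pow 2 x).sub_const (ν ^ 2)).rpow_const (Or.inl hq.ne')).congr_deriv ?_
  have hpow :
      (x ^ 2 - ν ^ 2) ^ ((1 : ℝ) / 4 - 1) = debyeAmplitude ν x / debyeAmplitude ν x ^ 4 := by
    rw [rpow_sub_one hq.ne', debyeAmplitude_pow_four hν hx, debyeAmplitude]
  rw [hpow]
  push_cast
  field_simp
  ring

lemma hasDerivAt_debyePhase (hν : 0 ≤ ν) (hx : ν < x) :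
    HasDerivAt (debyePhase ν) (debyeAmplitude ν x ^ 2 / x) x := by
  have hx0 : 0 < x := hν.trans_lt hx
  have hp := debyeAmplitude_pos hν hx
  have hp4 := debyeAmplitude_pow_four hν hx
  have hsqrt := ((hasDerivAt_pow 2 x).sub_const (ν ^ 2)).sqrt (sq_sub_sq_pos_of_lt hν hx).ne'
  have hdiv : HasDerivAt (fun x => ν / x) (ν * -(x ^ 2)⁻¹) x := (hasDerivAt_inv hx0.ne').const_mul ν
  have harccos := ((hasDerivAt_arccos (by linarith [div_nonneg hν hx0.le])
    ((div_lt_one hx0).2 hx).ne).comp x hdiv).const_mul ν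
  refine (hsqrt.sub harccos).congr_deriv ?_
  rw [sqrt_one_sub_div_sq_eq hν hx, sqrt_sq_sub_sq_eq hν hx]
  push_cast
  field_simp
  linear_combination -hp4

lemma hasDerivAt_debyeControl (hν : 0 ≤ ν) (hx : ν < x) :
    HasDerivAt (debyeControl ν) (debyeControlDeriv ν x) x := by
  have hp := debyeAmplitude_pos hν hx
  have hp' := hasDerivAt_debyeAmplitude hν hx
  refine (((hasDerivAt_const x (1 / 4 : ℝ)).fun_div (hp'.fun_pow 2) (by positivity)).fun_add
    ((hasDerivAt_const x (5 / 12 * ν ^ 2)).fun_div (hp'.fun_pow 6) (by positivity))).congr_deriv ?_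
  rw [debyeControlDeriv]
  push_cast
  field_simp
  ring

lemma debyeControl_nonneg (hν : 0 ≤ ν) (hx : ν < x) : 0 ≤ debyeControl ν x := by
  have hp := debyeAmplitude_pos hν hx
  rw [debyeControl]
  positivity

lemma debyeControlDeriv_nonpos (hν : 0 ≤ ν) (hx : ν < x) : debyeControlDeriv ν x ≤ 0 := by
  have hp := debyeAmplitude_pos hν hx
  have hx0 : 0 < x := hν.trans_lt hx
  rw [debyeControlDeriv, neg_nonpos]
  positivity

lemma debyePhase_le_sq_debyeAmplitude (hν : 0 ≤ ν) (hx : ν < x) :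
    debyePhase ν x ≤ debyeAmplitude ν x ^ 2 := by
  rw [debyePhase, sqrt_sq_sub_sq_eq hν hx]
  exact sub_le_self _ (mul_nonneg hν (arccos_nonneg _))

lemma debyePhase_mul_sq_le (hν : 0 ≤ ν) (hx : ν < x) :
    debyePhase ν x * ν ^ 2 ≤ debyeAmplitude ν x ^ 6 / 3 := by
  have hp := debyeAmplitude_pos hν hx
  rcases hν.eq_or_lt with rfl | hν0
  · rw [zero_pow two_ne_zero, mul_zero]
    positivity
  have hx0 : 0 < x := hν.trans_lt hx
  rw [debyePhase, sqrt_sq_sub_sq_eq hν hx, arccos_eq_arctan (by positivity),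
    sqrt_one_sub_div_sq_eq hν hx, div_div_div_cancel_right₀ hx0.ne']
  set p := debyeAmplitude ν x
  calc (p ^ 2 - ν * arctan (p ^ 2 / ν)) * ν ^ 2
      ≤ (p ^ 2 - ν * (p ^ 2 / ν - (p ^ 2 / ν) ^ 3 / 3)) * ν ^ 2 := by
        gcongr
        exact arctan_ge_sub_cube_div_three (by positivity)
    _ = p ^ 6 / 3 := by
        field_simp
        ring

lemma debyeControl_le_one_div_debyePhase (hν : 0 ≤ ν) (hx : ν < x) (hφ : 0 < debyePhase ν x) :
    debyeControl ν x ≤ 1 / (2 * debyePhase ν x) := by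
  have hp := debyeAmplitude_pos hν hx
  have hfirst : 1 / 4 / debyeAmplitude ν x ^ 2 ≤ 1 / 4 / debyePhase ν x := by
    gcongr
    exact debyePhase_le_sq_debyeAmplitude hν hx
  have hsecond : 5 / 12 * ν ^ 2 / debyeAmplitude ν x ^ 6 ≤ 5 / 36 / debyePhase ν x := by
    rw [div_le_div_iff₀ (by positivity) hφ]
    linarith [debyePhase_mul_sq_le hν hx]
  calc debyeControl ν x ≤ 1 / 4 / debyePhase ν x + 5 / 36 / debyePhase ν x :=
        add_le_add hfirst hsecond
    _ = 7 / 18 / debyePhase ν x := by ring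
    _ ≤ 1 / 2 / debyePhase ν x := by gcongr ?_ / _; norm_num
    _ = 1 / (2 * debyePhase ν x) := div_div _ _ _

lemma tendsto_debyeAmplitude_div_sqrt (hν : 0 ≤ ν) :
    Tendsto (fun x => debyeAmplitude ν x / √x) atTop (𝓝 1) := by
  have hbase : Tendsto (fun x => 1 - (ν / x) ^ 2) atTop (𝓝 1) := by
    simpa using ((tendsto_id.const_div_atTop ν).pow 2).const_sub 1
  have hroot := hbase.rpow_const (p := (1 : ℝ) / 4) (Or.inl one_ne_zero)
  rw [one_rpow] at hroot
  refine hroot.congr' ?_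
  filter_upwards [eventually_gt_atTop ν] with x hx
  have hx0 : 0 < x := hν.trans_lt hx
  have hsqrt : √x = (x ^ 2) ^ ((1 : ℝ) / 4) := by
    rw [sqrt_eq_rpow, ← rpow_natCast_mul hx0.le]
    norm_num
  rw [debyeAmplitude, hsqrt, ← div_rpow (sq_sub_sq_pos_of_lt hν hx).le (sq_nonneg x), sub_div,
    div_self (by positivity), div_pow]

lemma tendsto_sqrt_sq_sub_sq_sub_self (hν : 0 ≤ ν) :
    Tendsto (fun x => √(x ^ 2 - ν ^ 2) - x) atTop (𝓝 0) := by
  refine squeeze_zero_norm' (a := fun x => ν ^ 2 / x) ?_ (tendsto_id.const_div_atTop _)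
  filter_upwards [eventually_gt_atTop ν] with x hx
  have hx0 : 0 < x := hν.trans_lt hx
  have hsq := mul_self_sqrt (sq_sub_sq_pos_of_lt hν hx).le
  have hle : √(x ^ 2 - ν ^ 2) ≤ x := by
    rw [sqrt_le_left hx0.le]
    exact sub_le_self _ (sq_nonneg ν)
  rw [norm_of_nonpos (sub_nonpos.2 hle), le_div_iff₀ hx0]
  nlinarith [sqrt_nonneg (x ^ 2 - ν ^ 2)]

lemma tendsto_debyePhase_sub (hν : 0 ≤ ν) :
    Tendsto (fun x => debyePhase ν x - (x - ν * π / 2)) atTop (𝓝 0) := by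
  have harccos : Tendsto (fun x => ν * (π / 2 - arccos (ν / x))) atTop (𝓝 0) := by
    simpa using (((continuous_arccos.tendsto 0).comp
      (tendsto_id.const_div_atTop ν)).const_sub (π / 2)).const_mul ν
  have hsum := (tendsto_sqrt_sq_sub_sq_sub_self hν).add harccos
  rw [add_zero] at hsum
  refine hsum.congr fun x => ?_
  rw [debyePhase]
  ring

lemma tendsto_debyePhase_atTop (hν : 0 ≤ ν) : Tendsto (debyePhase ν) atTop atTop := by
  have hlin : Tendsto (fun x => x - ν * π / 2) atTop atTop :=
    tendsto_atTop_add_const_right _ _ tendsto_id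
  simpa using (tendsto_debyePhase_sub hν).add_atTop hlin

lemma tendsto_debyeAmplitude_mul_sub_cos (hν : 0 ≤ ν) {y : ℝ → ℝ} {δ : ℝ}
    (hy : Tendsto (fun x => √x * y x - cos (x - ν * π / 2 - δ)) atTop (𝓝 0)) :
    Tendsto (fun x => debyeAmplitude ν x * y x - cos (debyePhase ν x - δ)) atTop (𝓝 0) := by
  have hamp := tendsto_debyeAmplitude_div_sqrt hν
  have hcos : Tendsto (fun x => cos (x - ν * π / 2 - δ) - cos (debyePhase ν x - δ))
      atTop (𝓝 0) := by
    refine squeeze_zero_norm (fun x => ?_)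
      (tendsto_zero_iff_norm_tendsto_zero.1 (tendsto_debyePhase_sub hν))
    refine (abs_cos_sub_cos_le _ _).trans_eq ?_
    rw [sub_sub_sub_cancel_right, abs_sub_comm, norm_eq_abs]
  have hmul : Tendsto (fun x => (debyeAmplitude ν x / √x - 1) * cos (x - ν * π / 2 - δ))
      atTop (𝓝 0) := by
    refine squeeze_zero_norm (a := fun x => ‖debyeAmplitude ν x / √x - 1‖) (fun x => ?_) ?_
    · rw [norm_mul]
      exact mul_le_of_le_one_right (norm_nonneg _) (abs_cos_le_one _)
    · simpa using (hamp.sub_const 1).norm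
  have hsum := ((hamp.mul hy).add hmul).add hcos
  rw [mul_zero, add_zero, add_zero] at hsum
  refine hsum.congr' ?_
  filter_upwards [eventually_gt_atTop 0] with x hx
  have : 0 < √x := sqrt_pos.2 hx
  field_simp
  ring

end Debye

/-! ### The Liouville–Green approximation -/

section LiouvilleGreen

variable {ν x δ : ℝ} {y : ℝ → ℝ}

lemma SolvesBessel.exists_isPerturbedOscillator (hy : SolvesBessel ν 0 y) (hν : 0 ≤ ν)
    (hx : ν < x) :
    ∃ V, IsPerturbedOscillator x (debyePhase ν) (fun t => debyeAmplitude ν t ^ 2 / t)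
      (debyeControl ν) (debyeControlDeriv ν) (fun t => debyeAmplitude ν t * y t) V := by
  obtain ⟨y', hy'⟩ := hy
  refine ⟨fun t => t ^ 2 * y t / (2 * debyeAmplitude ν t ^ 5) + t * y' t / debyeAmplitude ν t,
    fun t ht => hasDerivAt_debyePhase hν (hx.trans_le ht),
    fun t ht => hasDerivAt_debyeControl hν (hx.trans_le ht),
    fun t ht => debyeControl_nonneg hν (hx.trans_le ht),
    fun t ht => debyeControlDeriv_nonpos hν (hx.trans_le ht), fun t ht => ?_, fun t ht => ?_⟩
  all_goals
    have hνt : ν < t := hx.trans_le ht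
    have ht0 : 0 < t := hν.trans_lt hνt
    have hp := debyeAmplitude_pos hν hνt
    have hp4 := debyeAmplitude_pow_four hν hνt
    have hp' := hasDerivAt_debyeAmplitude hν hνt
    obtain ⟨hyt, hyt'⟩ := hy' t ht0
  · refine (hp'.mul hyt).congr_deriv ?_
    field_simp
  · refine ((((hasDerivAt_pow 2 t).fun_mul hyt).fun_div ((hp'.fun_pow 5).const_mul 2)
      (by positivity)).fun_add
      (((hasDerivAt_id' t).fun_mul hyt').fun_div hp' hp.ne')).congr_deriv ?_
    rw [debyeControlDeriv, ← hp4]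
    have hν2 : ν ^ 2 = t ^ 2 - debyeAmplitude ν t ^ 4 := by rw [hp4]; ring
    rw [hν2]
    push_cast
    simp only [Pi.zero_apply]
    generalize debyeAmplitude ν t = p at *
    field_simp
    ring

theorem SolvesBessel.abs_debyeAmplitude_mul_sub_cos_le (hy : SolvesBessel ν 0 y) (hν : 0 ≤ ν)
    (hlim : Tendsto (fun x => √x * y x - cos (x - ν * π / 2 - δ)) atTop (𝓝 0)) (hx : ν < x)
    (hφ : 1 ≤ debyePhase ν x) :
    |debyeAmplitude ν x * y x - cos (debyePhase ν x - δ)| ≤ 1 / debyePhase ν x := by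
  have hcontrol := debyeControl_le_one_div_debyePhase hν hx (by positivity)
  have hhalf : debyeControl ν x ≤ 1 / 2 := hcontrol.trans (by gcongr; linarith)
  obtain ⟨V, hosc⟩ := hy.exists_isPerturbedOscillator hν hx
  calc |debyeAmplitude ν x * y x - cos (debyePhase ν x - δ)|
      ≤ 2 * debyeControl ν x := hosc.abs_sub_cos_le_two_mul (tendsto_debyePhase_atTop hν)
        (tendsto_debyeAmplitude_mul_sub_cos hν hlim) hhalf
    _ ≤ 2 * (1 / (2 * debyePhase ν x)) := by gcongr
    _ = 1 / debyePhase ν x := by field_simp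

end LiouvilleGreen

theorem besselJ_asymptotics_near_general {ν x : ℝ} (hν : 0 ≤ ν) (hx : ν < x)
    (h : 1 ≤ π * (x * gfun (ν / x))) :
    |√(π / 2) * (x ^ 2 - ν ^ 2) ^ ((1 : ℝ) / 4) * besselJ ν x -
      sin (π * (x * gfun (ν / x)) + π / 4)| ≤ 1 / (π * (x * gfun (ν / x))) := by
  have hsolves : SolvesBessel ν 0 fun x => √(π / 2) * besselJ ν x := by
    simpa [← Pi.zero_def] using (solvesBessel_besselJ hν).const_mul √(π / 2)
  have hsin : sin (debyePhase ν x + π / 4) = cos (debyePhase ν x - π / 4) := by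
    rw [← cos_sub_pi_div_two]
    ring_nf
  have hamp : √(π / 2) * (x ^ 2 - ν ^ 2) ^ ((1 : ℝ) / 4) * besselJ ν x =
      debyeAmplitude ν x * (√(π / 2) * besselJ ν x) := by
    rw [debyeAmplitude, mul_left_comm, mul_assoc]
  rw [pi_mul_gfun_eq_debyePhase hν hx] at h ⊢
  rw [hamp, hsin]
  exact hsolves.abs_debyeAmplitude_mul_sub_cos_le hν (tendsto_sqrt_mul_besselJ_sub_cos hν) hx h

/-- asymptotics of `J_ν(x)` in the transition regime `ν < x ≤ (1+c)ν` with
`x g(ν/x) ≥ 1`. -/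
theorem besselJ_asymptotics_near (c : ℝ) (hc : 0 < c) :
    ∃ N C : ℝ, 0 < N ∧ 0 < C ∧ ∀ ν x : ℝ, N ≤ ν → ν < x → x ≤ (1 + c) * ν →
      1 ≤ x * gfun (ν / x) →
      |Real.sqrt (π / 2) * (x ^ 2 - ν ^ 2) ^ ((1 : ℝ) / 4) * besselJ ν x -
          Real.sin (π * (x * gfun (ν / x)) + π / 4)| ≤ C / (x * gfun (ν / x)) := by
  refine ⟨1, 1, one_pos, one_pos, fun ν x hν hx _ hg => ?_⟩
  have hle : x * gfun (ν / x) ≤ π * (x * gfun (ν / x)) :=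
    le_mul_of_one_le_left (zero_le_one.trans hg) (by linarith [pi_gt_three])
  exact (besselJ_asymptotics_near_general (zero_le_one.trans hν) hx (hg.trans hle)).trans
    (one_div_le_one_div_of_le (one_pos.trans_le hg) hle)
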